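/- arXiv:2604.09014 — 7 statements merged into one kernel-verified Lean document; each statement's English description precedes it below -/
import Mathlib

section
/- Let (V, m, B) be a finite Dirichlet multigraph with V° := V \ B nonempty. Let h ≥ 0 be a real number such that h * vol(A) ≤ cut(A) for every nonempty subset A ⊆ V°. Then for every function f : V → ℝ with f(v) = 0 for all v ∈ B, one has (h^2 / 2) * Σ_{v ∈ V°} deg(v) * (f v)^2 ≤ E(f). -/
/-!
The proof is the classical Cheeger argument applied to `g = f ^ 2`.

* `coarea_le`: the isoperimetric hypothesis on vertex sets upgrades to the functional inequality
  `h * ∑ d v * g v ≤ ∑ u, ∑ v, w u v * max (g u - g v) 0` for every `g ≥ 0` vanishing on `B`.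
  This is the discrete coarea formula, obtained by peeling the superlevel sets of `g` off one at
  a time: subtracting the least positive value of `g` on its support shrinks the support.
* By symmetry of `w` the right-hand side is half of `∑ u, ∑ v, w u v * |g u - g v|`. As
  `|f u ^ 2 - f v ^ 2| = |f u - f v| * |f u + f v|`, Cauchy–Schwarz bounds the square of the latter
  sum by `2 * E(f)` times `∑ u, ∑ v, w u v * (f u + f v) ^ 2`, and this last factor is at most
  `4 * ∑ d v * f v ^ 2` (`sum_add_sq_le`).

With `D = ∑ d v * f v ^ 2` this gives `(2 * h * D) ^ 2 ≤ 2 * E(f) * (4 * D)`, and one divides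
by `D`.
-/

open Finset

/-- Functional form of the isoperimetric inequality (discrete coarea argument), for arbitrary
real edge weights `w` and vertex weights `d`. -/
lemma coarea_le {V : Type*} [Fintype V] [DecidableEq V]
    (w : V → V → ℝ) (d : V → ℝ) (B : Finset V) (h : ℝ)
    (hc : ∀ A : Finset V, A ⊆ Finset.univ \ B → A.Nonempty →
      h * ∑ v ∈ A, d v ≤ ∑ u ∈ A, ∑ v ∈ Aᶜ, w u v) :
    ∀ (n : ℕ) (g : V → ℝ), (∀ v, 0 ≤ g v) → (∀ v ∈ B, g v = 0) →
      (Finset.univ.filter (fun v => g v ≠ 0)).card = n →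
      h * ∑ v, d v * g v ≤ ∑ u, ∑ v, w u v * max (g u - g v) 0 := by
  intro n
  induction n using Nat.strong_induction_on with
  | _ n ih =>
  intro g hg hgB hn
  set A := Finset.univ.filter (fun v => g v ≠ 0) with hA
  have memA : ∀ v, v ∈ A ↔ g v ≠ 0 := fun v => by simp [hA]
  rcases A.eq_empty_or_nonempty with hAe | hAne
  · have hz : ∀ v, g v = 0 := fun v => by
      by_contra hv
      have := (memA v).2 hv
      simp [hAe] at this
    simp [hz]
  · obtain ⟨a, haA, hmin⟩ := A.exists_min_image g hAne
    have hAB : A ⊆ Finset.univ \ B := fun v hv => by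
      simp only [Finset.mem_sdiff, Finset.mem_univ, true_and]
      exact fun hb => (memA v).1 hv (hgB v hb)
    -- remove the lowest layer, of height `g a`, from the support `A` of `g`
    let g' : V → ℝ := fun v => g v - if v ∈ A then g a else 0
    have hg'A : ∀ v, v ∈ A → g' v = g v - g a := fun v hv => by simp [g', hv]
    have hgN : ∀ v, v ∉ A → g v = 0 := fun v hv => by
      by_contra h0
      exact hv ((memA v).2 h0)
    have hg'N : ∀ v, v ∉ A → g' v = 0 := fun v hv => by simp [g', hv, hgN v hv]
    have hg'0 : ∀ v, 0 ≤ g' v := fun v => by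
      by_cases hv : v ∈ A
      · rw [hg'A v hv]; linarith [hmin v hv]
      · rw [hg'N v hv]
    have hlt : (Finset.univ.filter (fun v => g' v ≠ 0)).card < n := by
      rw [← hn]
      apply Finset.card_lt_card
      refine (Finset.ssubset_iff_of_subset ?_).2 ⟨a, haA, ?_⟩
      · intro v hv
        by_contra hvA
        exact (Finset.mem_filter.1 hv).2 (hg'N v hvA)
      · simp [hg'A a haA]
    have key := ih _ hlt g' hg'0
      (fun v hv => hg'N v (fun hvA => (memA v).1 hvA (hgB v hv))) rfl
    have e1 : ∑ v, d v * g v = ∑ v, d v * g' v + g a * ∑ v ∈ A, d v := by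
      rw [Finset.mul_sum, ← Finset.sum_filter_add_sum_filter_not (s := Finset.univ) (p := (· ∈ A))
        (f := fun v => d v * g v), ← Finset.sum_filter_add_sum_filter_not (s := Finset.univ)
        (p := (· ∈ A)) (f := fun v => d v * g' v)]
      rw [Finset.sum_congr rfl (g := fun v => d v * g' v + g a * d v),
        Finset.sum_add_distrib, Finset.sum_congr (s₁ := Finset.univ.filter (· ∉ A)) rfl
          (g := fun v => d v * g' v)]
      · simp only [Finset.filter_univ_mem]; ring
      · intro v hv
        have hv := (Finset.mem_filter.1 hv).2
        rw [hg'N v hv, hgN v hv]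
      · intro v hv
        rw [hg'A v (Finset.mem_filter.1 hv).2]; ring
    have e2 : ∑ u, ∑ v, w u v * max (g u - g v) 0
        = ∑ u, ∑ v, w u v * max (g' u - g' v) 0 + g a * ∑ u ∈ A, ∑ v ∈ Aᶜ, w u v := by
      have cutEq : ∑ u ∈ A, ∑ v ∈ Aᶜ, w u v
          = ∑ u, ∑ v, if u ∈ A ∧ v ∉ A then w u v else 0 := by
        have hcompl : Aᶜ = Finset.univ.filter (· ∉ A) := by ext; simp
        rw [hcompl]
        simp only [ite_and, Finset.sum_filter, Finset.sum_ite_irrel, Finset.sum_const_zero,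
          Finset.sum_ite_mem, Finset.univ_inter]
      rw [cutEq, Finset.mul_sum, ← Finset.sum_add_distrib]
      refine Finset.sum_congr rfl fun u _ => ?_
      rw [Finset.mul_sum, ← Finset.sum_add_distrib]
      refine Finset.sum_congr rfl fun v _ => ?_
      by_cases hu : u ∈ A <;> by_cases hv : v ∈ A
      · simp [hu, hv, hg'A]
      · have h1 : 0 ≤ g u - g a := by linarith [hmin u hu]
        simp only [hu, hv, hg'A u hu, hg'N v hv, hgN v hv, sub_zero, max_eq_left h1,
          max_eq_left (hg u), not_false_eq_true, and_self, if_true]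
        ring
      · simp [hu, hgN u hu, hg'N u hu, hg v, hg'0 v]
      · simp [hu, hgN u hu, hg'N u hu, hg v, hg'0 v]
    rw [e1, e2]
    have := mul_le_mul_of_nonneg_left (hc A hAB hAne) (hg a)
    linarith

/-- The complementary factor in Cauchy–Schwarz, bounded through
`(f u + f v) ^ 2 ≤ 2 * (f u ^ 2 + f v ^ 2)`. -/
lemma sum_add_sq_le {V : Type*} [Fintype V] (w : V → V → ℝ) (hw : ∀ u v, 0 ≤ w u v)
    (hs : ∀ u v, w u v = w v u) (f : V → ℝ) :
    ∑ u, ∑ v, w u v * (f u + f v) ^ 2 ≤ 4 * ∑ u, (∑ v, w u v) * f u ^ 2 := by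
  have swap : ∑ u, ∑ v, w u v * f v ^ 2 = ∑ u, ∑ v, w u v * f u ^ 2 := by
    rw [Finset.sum_comm]
    exact Finset.sum_congr rfl fun u _ => Finset.sum_congr rfl fun v _ => by rw [hs]
  calc ∑ u, ∑ v, w u v * (f u + f v) ^ 2
      ≤ ∑ u, ∑ v, (2 * (w u v * f u ^ 2) + 2 * (w u v * f v ^ 2)) := by
        refine Finset.sum_le_sum fun u _ => Finset.sum_le_sum fun v _ => ?_
        nlinarith [mul_nonneg (hw u v) (sq_nonneg (f u - f v))]
    _ = 4 * ∑ u, (∑ v, w u v) * f u ^ 2 := by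
        simp only [Finset.sum_add_distrib, ← Finset.mul_sum, swap, Finset.sum_mul]
        ring

/-- Cauchy–Schwarz for `|f u ^ 2 - f v ^ 2| = |f u - f v| * |f u + f v|` with respect to the edge
weights. -/
lemma sum_abs_sq_sub_sq_le {V : Type*} [Fintype V] (w : V → V → ℝ) (hw : ∀ u v, 0 ≤ w u v)
    (f : V → ℝ) :
    (∑ u, ∑ v, w u v * |f u ^ 2 - f v ^ 2|) ^ 2
      ≤ (∑ u, ∑ v, w u v * (f u - f v) ^ 2) * ∑ u, ∑ v, w u v * (f u + f v) ^ 2 := by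
  simp only [← Fintype.sum_prod_type']
  refine Finset.sum_sq_le_sum_mul_sum_of_sq_le_mul _ (fun p _ => ?_) (fun p _ => ?_)
    (fun p _ => ?_)
  · exact mul_nonneg (hw _ _) (sq_nonneg _)
  · exact mul_nonneg (hw _ _) (sq_nonneg _)
  · rw [mul_pow, sq_abs]
    exact le_of_eq (by ring)

/-- **Weighted Dirichlet Cheeger inequality.**
Let `(V, m, B)` be a finite Dirichlet multigraph: `V` a finite vertex type,
`m : V → V → ℕ` a symmetric edge-multiplicity function (`m v v` counts
self-loops), and `B ⊆ V` a nonempty boundary set with nonempty interior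
`V° = V \ B`.  The degree of `v` is `(∑ u, m v u) + m v v` (each self-loop
contributes 2).  If `h ≥ 0` satisfies `h · vol(A) ≤ cut(A)` for every nonempty
`A ⊆ V°`, then every `f : V → ℝ` vanishing on `B` satisfies
`(h²/2) · ∑_{v ∈ V°} deg(v) · f(v)² ≤ E(f)`, where
`E(f) = (1/2) ∑_{u,v} m u v (f u − f v)²`. -/
theorem weighted_dirichlet_cheeger
    {V : Type*} [Fintype V] [DecidableEq V]
    (m : V → V → ℕ) (hsymm : ∀ u v, m u v = m v u)
    (B : Finset V) (hBne : B.Nonempty) (hint : (Finset.univ \ B).Nonempty)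
    (h : ℝ) (hh : 0 ≤ h)
    (hcheeger : ∀ A : Finset V, A ⊆ Finset.univ \ B → A.Nonempty →
      h * ∑ v ∈ A, (((∑ u, m v u) + m v v : ℕ) : ℝ)
        ≤ ∑ u ∈ A, ∑ v ∈ Aᶜ, (m u v : ℝ))
    (f : V → ℝ) (hf : ∀ v ∈ B, f v = 0) :
    (h ^ 2 / 2) * ∑ v ∈ Finset.univ \ B, (((∑ u, m v u) + m v v : ℕ) : ℝ) * (f v) ^ 2
      ≤ (1 / 2) * ∑ u, ∑ v, (m u v : ℝ) * (f u - f v) ^ 2 := by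
  set w : V → V → ℝ := fun u v => (m u v : ℝ) with hwdef
  set d : V → ℝ := fun v => (((∑ u, m v u) + m v v : ℕ) : ℝ) with hd
  have hw : ∀ u v, 0 ≤ w u v := fun u v => Nat.cast_nonneg _
  have hs : ∀ u v, w u v = w v u := fun u v => by simp only [hwdef, hsymm u v]
  have hdw : ∀ v, ∑ u, w v u ≤ d v := fun v => by
    simp only [hd, hwdef]; push_cast
    linarith [Nat.cast_nonneg (α := ℝ) (m v v)]
  have hD : ∑ v ∈ Finset.univ \ B, d v * f v ^ 2 = ∑ v, d v * f v ^ 2 := by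
    refine Finset.sum_subset (Finset.subset_univ _) fun v _ hv => ?_
    have hvB : v ∈ B := by simpa using hv
    simp [hf v hvB]
  have hco := coarea_le w d B h hcheeger _ (fun v => f v ^ 2) (fun v => sq_nonneg _)
    (fun v hv => by simp [hf v hv]) rfl
  have hpos : 2 * ∑ u, ∑ v, w u v * max (f u ^ 2 - f v ^ 2) 0
      = ∑ u, ∑ v, w u v * |f u ^ 2 - f v ^ 2| := by
    have swap : ∑ u, ∑ v, w u v * max (f u ^ 2 - f v ^ 2) 0
        = ∑ u, ∑ v, w u v * max (f v ^ 2 - f u ^ 2) 0 := by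
      rw [Finset.sum_comm]
      exact Finset.sum_congr rfl fun u _ => Finset.sum_congr rfl fun v _ => by rw [hs]
    rw [two_mul]
    nth_rewrite 2 [swap]
    simp only [← Finset.sum_add_distrib, ← mul_add]
    refine Finset.sum_congr rfl fun u _ => Finset.sum_congr rfl fun v _ => ?_
    rcases le_total (f u ^ 2) (f v ^ 2) with hle | hle
    · rw [max_eq_right (by linarith), max_eq_left (by linarith), abs_of_nonpos (by linarith)]
      ring
    · rw [max_eq_left (by linarith), max_eq_right (by linarith), abs_of_nonneg (by linarith)]
      ring
  have hcs := sum_abs_sq_sub_sq_le w hw f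
  have hsum : ∑ u, ∑ v, w u v * (f u + f v) ^ 2 ≤ 4 * ∑ v, d v * f v ^ 2 := by
    refine (sum_add_sq_le w hw hs f).trans ?_
    gcongr with u _
    exact hdw u
  have hE : 0 ≤ ∑ u, ∑ v, w u v * (f u - f v) ^ 2 :=
    Finset.sum_nonneg fun u _ => Finset.sum_nonneg fun v _ => mul_nonneg (hw u v) (sq_nonneg _)
  have hD0 : 0 ≤ ∑ v, d v * f v ^ 2 :=
    Finset.sum_nonneg fun v _ => mul_nonneg (Nat.cast_nonneg _) (sq_nonneg _)
  rw [hD]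
  change h ^ 2 / 2 * _ ≤ 1 / 2 * ∑ u, ∑ v, w u v * (f u - f v) ^ 2
  generalize ∑ v, d v * f v ^ 2 = D at *
  generalize ∑ u, ∑ v, w u v * (f u - f v) ^ 2 = E at *
  generalize ∑ u, ∑ v, w u v * (f u + f v) ^ 2 = F at *
  rcases hD0.eq_or_lt with h0 | h0
  · rw [← h0]; linarith
  · have h1 : (2 * (h * D)) ^ 2 ≤ E * (4 * D) := by
      refine le_trans ?_ (hcs.trans (mul_le_mul_of_nonneg_left hsum hE))
      have := mul_nonneg hh hD0
      gcongr
      linarith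
    have h2 : h ^ 2 * D ≤ E := by
      refine le_of_mul_le_mul_right ?_ (by positivity : (0 : ℝ) < 4 * D)
      linarith
    linarith
end

section
/- Let (V, m, B) be a finite Dirichlet multigraph with V° := V \ B nonempty and deg(v) ≥ 1 for every v ∈ V°. Let α > 1 and C₀ > 0 be real numbers, and suppose that for every nonempty subset A ⊆ V° that is connected (meaning: the simple graph on A in which u is adjacent to v iff u ≠ v and m u v > 0 is connected), one has vol(A) ≤ C₀ * cut(A)^α. Then for every function f : V → ℝ with f(v) = 0 for all v ∈ B, one has (1/2) * C₀^(−2/α) * vol(V°)^(2/α − 2) * Σ_{v ∈ V°} deg(v) * (f v)^2 ≤ E(f). -/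
/-!
Write `W = vol(V°)` and `h = C₀^(-1/α) * W^(1/α - 1)`. For connected `A ⊆ V°`, the isoperimetric
hypothesis together with `vol(A) = vol(A)^(1/α) * vol(A)^(1 - 1/α) ≤ vol(A)^(1/α) * W^(1 - 1/α)`
gives the linear inequality `h * vol(A) ≤ cut(A)` (`linear_of_isoperimetric`). Both sides of a linear
inequality are additive over connected components, so it holds for every `A ⊆ V°`
(`linear_iso_of_connected`); linearizing before decomposing makes subadditivity of powers unnecessary.

The rest is the Dirichlet Cheeger inequality with constant `h`. Peeling off the superlevel sets of a
nonnegative function `g` vanishing on `B` gives `2 h ∑ deg * g ≤ ∑∑ m * |g u - g v|` (`coarea`).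
Taking `g = f²` and using `h |a² - b²| ≤ (a - b)² + (h²/4) (a + b)²` in place of Cauchy–Schwarz
yields `(h²/2) ∑ deg * f² ≤ E(f)` (`cheeger`), and `h² = C₀^(-2/α) * W^(2/α - 2)`.
-/

open Finset

/-- The linear isoperimetric inequality extends from connected sets to all subsets of `S`: a
disconnected set splits into two proper parts with no edges between them, over which the cut is
additive. The weights `d` are arbitrary. -/
lemma linear_iso_of_connected {V : Type*} [Fintype V] [DecidableEq V]
    (m : V → V → ℕ) (S : Finset V) (d : V → ℝ) (h : ℝ)
    (hiso : ∀ A : Finset V, A ⊆ S → A.Nonempty →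
      (SimpleGraph.induce (↑A : Set V)
          (SimpleGraph.fromRel fun u v => 0 < m u v)).Connected →
      h * ∑ v ∈ A, d v ≤ ∑ u ∈ A, ∑ v ∈ Aᶜ, (m u v : ℝ))
    (A : Finset V) (hA : A ⊆ S) :
    h * ∑ v ∈ A, d v ≤ ∑ u ∈ A, ∑ v ∈ Aᶜ, (m u v : ℝ) := by
  classical
  induction A using Finset.strongInduction with
  | H A ih =>
    rcases A.eq_empty_or_nonempty with rfl | hne
    · simp
    by_cases hc : (SimpleGraph.induce (↑A : Set V)
          (SimpleGraph.fromRel fun u v => 0 < m u v)).Connected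
    · exact hiso A hA hne hc
    have hnp : ¬ (SimpleGraph.induce (↑A : Set V)
          (SimpleGraph.fromRel fun u v => 0 < m u v)).Preconnected := by
      intro hp
      have : Nonempty (↑A : Set V) := ⟨⟨hne.choose, hne.choose_spec⟩⟩
      exact hc ⟨hp⟩
    simp only [SimpleGraph.Preconnected, not_forall] at hnp
    obtain ⟨x, y, hxy⟩ := hnp
    set G := SimpleGraph.induce (↑A : Set V)
          (SimpleGraph.fromRel fun u v => 0 < m u v) with hG
    -- `P` is the connected component of `x` in `A`.
    set P : Finset V := A.filter (fun w => ∃ hw : w ∈ (↑A : Set V), G.Reachable x ⟨w, hw⟩) with hP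
    have hPA : P ⊆ A := Finset.filter_subset _ _
    have hxP : (x : V) ∈ P := by
      rw [hP, Finset.mem_filter]
      exact ⟨x.2, x.2, SimpleGraph.Reachable.refl _⟩
    have hyP : (y : V) ∉ P := by
      rw [hP, Finset.mem_filter]
      rintro ⟨-, _, hr⟩
      exact hxy hr
    have hno : ∀ u ∈ P, ∀ v ∈ A \ P, m u v = 0 ∧ m v u = 0 := by
      intro u hu v hv
      rw [Finset.mem_sdiff] at hv
      obtain ⟨huA, hu', hr⟩ := Finset.mem_filter.mp hu
      by_contra hm
      apply hv.2
      rw [hP, Finset.mem_filter]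
      refine ⟨hv.1, hv.1, hr.trans (SimpleGraph.Adj.reachable ?_)⟩
      rw [hG, SimpleGraph.induce_adj, SimpleGraph.fromRel_adj]
      have huv : u ≠ v := fun e => hv.2 (e ▸ hu)
      refine ⟨huv, ?_⟩
      dsimp only
      omega
    have h1 := ih P (Finset.ssubset_iff_subset_ne.mpr ⟨hPA, fun e => hyP (by rw [e]; exact y.2)⟩)
      (hPA.trans hA)
    have h2 := ih (A \ P) (Finset.sdiff_ssubset hPA ⟨x, hxP⟩) (Finset.sdiff_subset.trans hA)
    have hcutP : ∀ u ∈ P, ∑ v ∈ Pᶜ, (m u v : ℝ) = ∑ v ∈ Aᶜ, (m u v : ℝ) := by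
      intro u hu
      symm
      apply Finset.sum_subset (Finset.compl_subset_compl.mpr hPA)
      intro v hv hv'
      simp only [Finset.mem_compl, not_not] at hv hv'
      exact_mod_cast (hno u hu v (Finset.mem_sdiff.mpr ⟨hv', hv⟩)).1
    have hcutQ : ∀ u ∈ A \ P, ∑ v ∈ (A \ P)ᶜ, (m u v : ℝ) = ∑ v ∈ Aᶜ, (m u v : ℝ) := by
      intro u hu
      symm
      apply Finset.sum_subset (Finset.compl_subset_compl.mpr Finset.sdiff_subset)
      intro v hv hv'
      simp only [Finset.mem_compl, not_not, Finset.mem_sdiff, not_and] at hv hv'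
      exact_mod_cast (hno v (hv hv') u hu).2
    rw [Finset.sum_congr rfl hcutP] at h1
    rw [Finset.sum_congr rfl hcutQ] at h2
    rw [← Finset.sum_sdiff hPA, ← Finset.sum_sdiff hPA, mul_add]
    exact add_le_add h2 h1

lemma sum_abs_indicator {V : Type*} [Fintype V] [DecidableEq V]
    (m : V → V → ℕ) (hsymm : ∀ u v, m u v = m v u) (A : Finset V) :
    ∑ u, ∑ v, (m u v : ℝ) * |(if u ∈ A then (1 : ℝ) else 0) - (if v ∈ A then (1 : ℝ) else 0)|
      = 2 * ∑ u ∈ A, ∑ v ∈ Aᶜ, (m u v : ℝ) := by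
  have key : ∀ u v, (m u v : ℝ) *
      |(if u ∈ A then (1 : ℝ) else 0) - (if v ∈ A then (1 : ℝ) else 0)|
      = (if u ∈ A then (if v ∈ Aᶜ then (m u v : ℝ) else 0) else 0)
        + (if v ∈ A then (if u ∈ Aᶜ then (m v u : ℝ) else 0) else 0) := by
    intro u v
    rw [hsymm v u]
    by_cases hu : u ∈ A <;> by_cases hv : v ∈ A <;> simp [hu, hv]
  have e1 : ∑ u, ∑ v, (if u ∈ A then (if v ∈ Aᶜ then (m u v : ℝ) else 0) else 0)
      = ∑ u ∈ A, ∑ v ∈ Aᶜ, (m u v : ℝ) := by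
    rw [← Finset.sum_filter_add_sum_filter_not Finset.univ (· ∈ A)]
    rw [Finset.sum_eq_zero (s := Finset.univ.filter (¬ · ∈ A)), add_zero]
    · simp only [Finset.filter_mem_eq_inter, Finset.univ_inter]
      refine Finset.sum_congr rfl fun u hu => ?_
      simp only [hu, if_true]
      rw [← Finset.sum_filter, Finset.filter_mem_eq_inter, Finset.univ_inter]
    · intro u hu
      simp [(Finset.mem_filter.mp hu).2]
  simp only [key, Finset.sum_add_distrib]
  have e2 : ∑ u, ∑ v, (if v ∈ A then (if u ∈ Aᶜ then (m v u : ℝ) else 0) else 0)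
      = ∑ u ∈ A, ∑ v ∈ Aᶜ, (m u v : ℝ) := by
    rw [Finset.sum_comm, e1]
  rw [e1, e2, two_mul]

/-- Discrete coarea inequality, by induction on the support `A` of `g`: subtracting
`(min over A of g) * 1_A` removes at least one point from the support, and both sides of the
inequality are additive under this operation. -/
lemma coarea {V : Type*} [Fintype V] [DecidableEq V]
    (m : V → V → ℕ) (hsymm : ∀ u v, m u v = m v u) (S : Finset V) (d : V → ℝ) (h : ℝ)
    (hiso : ∀ A : Finset V, A ⊆ S →
      h * ∑ v ∈ A, d v ≤ ∑ u ∈ A, ∑ v ∈ Aᶜ, (m u v : ℝ))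
    (A : Finset V) (hA : A ⊆ S) (g : V → ℝ) (hpos : ∀ v ∈ A, 0 < g v)
    (hzero : ∀ v ∉ A, g v = 0) :
    2 * h * ∑ v ∈ S, d v * g v ≤ ∑ u, ∑ v, (m u v : ℝ) * |g u - g v| := by
  induction A using Finset.strongInduction generalizing g with
  | H A ih =>
    rcases A.eq_empty_or_nonempty with rfl | hne
    · simp [show ∀ v, g v = 0 from fun v => hzero v (by simp)]
    obtain ⟨w, hw, hmin⟩ := A.exists_min_image g hne
    set c := g w with hc
    set χ : V → ℝ := fun v => if v ∈ A then 1 else 0 with hχ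
    set g' : V → ℝ := fun v => g v - c * χ v with hg'
    have hg'nn : ∀ v ∈ A, 0 ≤ g' v := by
      intro v hv
      simp only [hg', hχ, hv, if_true]
      linarith [hmin v hv]
    have hsub : A.filter (fun v => g' v ≠ 0) ⊂ A := by
      refine Finset.ssubset_iff_subset_ne.mpr ⟨Finset.filter_subset _ _, fun e => ?_⟩
      have := (Finset.mem_filter.mp (e.symm ▸ hw : w ∈ A.filter (fun v => g' v ≠ 0))).2
      apply this
      simp [hg', hχ, hw, hc]
    have h1 := ih _ hsub (hsub.subset.trans hA) g'
      (fun v hv => by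
        rw [Finset.mem_filter] at hv
        exact lt_of_le_of_ne (hg'nn v hv.1) hv.2.symm)
      (fun v hv => by
        by_cases hvA : v ∈ A
        · by_contra hh
          exact hv (Finset.mem_filter.mpr ⟨hvA, hh⟩)
        · simp [hg', hχ, hvA, hzero v hvA])
    have hcpos : 0 < c := hpos w hw
    have h2 := hiso A hA
    have h3 := sum_abs_indicator m hsymm A
    have habs : ∀ u v, (m u v : ℝ) * |g u - g v|
        = (m u v : ℝ) * |g' u - g' v| + c * ((m u v : ℝ) * |χ u - χ v|) := by
      intro u v
      have : |g u - g v| = |g' u - g' v| + c * |χ u - χ v| := by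
        by_cases hu : u ∈ A <;> by_cases hv : v ∈ A
        · simp [hg', hχ, hu, hv]
        · have := hmin u hu
          simp only [hg', hχ, hu, hv, if_true, if_false, hzero v hv]
          rw [abs_of_nonneg (by linarith), abs_of_nonneg (by linarith)]
          simp
        · have := hmin v hv
          simp only [hg', hχ, hu, hv, if_true, if_false, hzero u hu]
          rw [abs_of_nonpos (by linarith), abs_of_nonpos (by linarith)]
          simp
        · simp [hg', hχ, hu, hv]
      rw [this]
      ring
    have hsum : ∑ v ∈ S, d v * g v = ∑ v ∈ S, d v * g' v + c * ∑ v ∈ A, d v := by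
      have : ∑ v ∈ A, d v = ∑ v ∈ S, d v * χ v := by
        simp only [hχ, mul_ite, mul_one, mul_zero]
        rw [← Finset.sum_filter, Finset.filter_mem_eq_inter, Finset.inter_eq_right.mpr hA]
      rw [this, Finset.mul_sum, ← Finset.sum_add_distrib]
      refine Finset.sum_congr rfl fun v _ => ?_
      simp only [hg']
      ring
    simp only [habs, Finset.sum_add_distrib, ← Finset.mul_sum]
    rw [hsum, h3]
    nlinarith [mul_le_mul_of_nonneg_left h2 hcpos.le]

/-- Weighted Dirichlet Cheeger inequality; the weights `d` only need to dominate the number of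
edge ends at each vertex of `S`. -/
lemma cheeger {V : Type*} [Fintype V] [DecidableEq V]
    (m : V → V → ℕ) (hsymm : ∀ u v, m u v = m v u) (S : Finset V) (d : V → ℝ) (h : ℝ)
    (hh : 0 ≤ h) (hd : ∀ v ∈ S, ∑ u, (m v u : ℝ) ≤ d v)
    (hiso : ∀ A : Finset V, A ⊆ S →
      h * ∑ v ∈ A, d v ≤ ∑ u ∈ A, ∑ v ∈ Aᶜ, (m u v : ℝ))
    (f : V → ℝ) (hf : ∀ v ∉ S, f v = 0) :
    (1 / 2) * h ^ 2 * ∑ v ∈ S, d v * f v ^ 2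
      ≤ (1 / 2) * ∑ u, ∑ v, (m u v : ℝ) * (f u - f v) ^ 2 := by
  have h1 := coarea m hsymm S d h hiso (S.filter fun v => f v ≠ 0) (Finset.filter_subset _ _)
    (fun v => f v ^ 2)
    (fun v hv => by
      have := (Finset.mem_filter.mp hv).2
      positivity)
    (fun v hv => by
      by_cases hvS : v ∈ S
      · have : f v = 0 := by
          by_contra h0
          exact hv (Finset.mem_filter.mpr ⟨hvS, h0⟩)
        simp [this]
      · simp [hf v hvS])
  -- Summed form of `h |a² - b²| ≤ (a - b)² + (h²/4) (a + b)²` and `(a + b)² ≤ 2 (a² + b²)`.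
  have h2 : h * ∑ u, ∑ v, (m u v : ℝ) * |f u ^ 2 - f v ^ 2|
      ≤ ∑ u, ∑ v, (m u v : ℝ) * (f u - f v) ^ 2
        + h ^ 2 / 2 * (∑ u, ∑ v, (m u v : ℝ) * f u ^ 2 + ∑ u, ∑ v, (m u v : ℝ) * f v ^ 2) := by
    simp only [Finset.mul_sum, ← Finset.sum_add_distrib]
    refine Finset.sum_le_sum fun u _ => Finset.sum_le_sum fun v _ => ?_
    have hp : h * |f u ^ 2 - f v ^ 2| ≤ (f u - f v) ^ 2 + h ^ 2 / 2 * (f u ^ 2 + f v ^ 2) := by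
      have e : |f u ^ 2 - f v ^ 2| = |f u - f v| * |f u + f v| := by
        rw [← abs_mul]
        ring_nf
      rw [e]
      have a1 := sq_abs (f u - f v)
      have a2 := sq_abs (f u + f v)
      nlinarith [sq_nonneg (|f u - f v| - h / 2 * |f u + f v|), sq_nonneg (h * (f u - f v))]
    have := mul_le_mul_of_nonneg_left hp (Nat.cast_nonneg (α := ℝ) (m u v))
    nlinarith
  have h3 : ∑ u, ∑ v, (m u v : ℝ) * f v ^ 2 = ∑ u, ∑ v, (m u v : ℝ) * f u ^ 2 := by
    rw [Finset.sum_comm]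
    exact Finset.sum_congr rfl fun u _ => Finset.sum_congr rfl fun v _ => by rw [hsymm v u]
  have h4 : ∑ u, ∑ v, (m u v : ℝ) * f u ^ 2 ≤ ∑ v ∈ S, d v * f v ^ 2 := by
    simp only [← Finset.sum_mul]
    rw [← Finset.sum_subset (Finset.subset_univ S) (fun v _ hv => by simp [hf v hv])]
    exact Finset.sum_le_sum fun v hv => mul_le_mul_of_nonneg_right (hd v hv) (sq_nonneg _)
  rw [h3] at h2
  have h5 := mul_le_mul_of_nonneg_left h1 hh
  have h6 := mul_le_mul_of_nonneg_left h4 (sq_nonneg h)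
  nlinarith

lemma linear_of_isoperimetric {α C W x c : ℝ} (hα : 1 < α) (hC : 0 < C) (hx : 0 < x)
    (hxW : x ≤ W) (hc : 0 ≤ c) (hiso : x ≤ C * c ^ α) :
    C ^ (-1 / α) * W ^ (1 / α - 1) * x ≤ c := by
  have hα0 : 0 < α := by linarith
  have hW : 0 < W := hx.trans_le hxW
  have hexp : 1 / α - 1 ≤ 0 := by
    rw [sub_nonpos, div_le_one hα0]
    exact hα.le
  have h1 : x ^ (1 / α) ≤ C ^ (1 / α) * c := by
    have := Real.rpow_le_rpow hx.le hiso (by positivity : 0 ≤ 1 / α)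
    rwa [Real.mul_rpow hC.le (by positivity), ← Real.rpow_mul hc, mul_one_div_cancel hα0.ne',
      Real.rpow_one] at this
  have h2 : W ^ (1 / α - 1) * x ≤ x ^ (1 / α) := by
    calc W ^ (1 / α - 1) * x ≤ x ^ (1 / α - 1) * x :=
          mul_le_mul_of_nonneg_right (Real.rpow_le_rpow_of_nonpos hx hxW hexp) hx.le
      _ = x ^ (1 / α) := by
          rw [← Real.rpow_add_one hx.ne']
          ring_nf
  calc C ^ (-1 / α) * W ^ (1 / α - 1) * x = C ^ (-1 / α) * (W ^ (1 / α - 1) * x) := by ring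
    _ ≤ C ^ (-1 / α) * (C ^ (1 / α) * c) :=
        mul_le_mul_of_nonneg_left (h2.trans h1) (by positivity)
    _ = c := by
        rw [← mul_assoc, ← Real.rpow_add hC, ← add_div]
        simp

/-- **Discrete Faber–Krahn eigenvalue bound.**
Let `(V, m, B)` be a finite Dirichlet multigraph with nonempty boundary `B`,
nonempty interior `V° = V \ B`, and every interior degree at least `1`.
Suppose the fractional isoperimetric inequality `vol(A) ≤ C₀ · cut(A)^α`
(with `α > 1`, `C₀ > 0`, real powers) holds for every nonempty connected
`A ⊆ V°`, where `A` is connected when the simple graph on `A` with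
`u ~ v ↔ u ≠ v ∧ m u v > 0` is connected.  Then every `f : V → ℝ` vanishing
on `B` satisfies
`(1/2) · C₀^(−2/α) · vol(V°)^(2/α − 2) · ∑_{v ∈ V°} deg(v) f(v)² ≤ E(f)`. -/
theorem faber_krahn_eigenvalue_bound
    {V : Type*} [Fintype V] [DecidableEq V]
    (m : V → V → ℕ) (hsymm : ∀ u v, m u v = m v u)
    (B : Finset V) (hBne : B.Nonempty) (hint : (Finset.univ \ B).Nonempty)
    (hdeg : ∀ v ∈ Finset.univ \ B, 1 ≤ (∑ u, m v u) + m v v)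
    (α C₀ : ℝ) (hα : 1 < α) (hC₀ : 0 < C₀)
    (hiso : ∀ A : Finset V, A ⊆ Finset.univ \ B → A.Nonempty →
      (SimpleGraph.induce (↑A : Set V)
          (SimpleGraph.fromRel fun u v => 0 < m u v)).Connected →
      (∑ v ∈ A, (((∑ u, m v u) + m v v : ℕ) : ℝ))
        ≤ C₀ * (∑ u ∈ A, ∑ v ∈ Aᶜ, (m u v : ℝ)) ^ α)
    (f : V → ℝ) (hf : ∀ v ∈ B, f v = 0) :
    (1 / 2) * C₀ ^ (-2 / α)
        * (∑ v ∈ Finset.univ \ B, (((∑ u, m v u) + m v v : ℕ) : ℝ)) ^ (2 / α - 2)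
        * ∑ v ∈ Finset.univ \ B, (((∑ u, m v u) + m v v : ℕ) : ℝ) * (f v) ^ 2
      ≤ (1 / 2) * ∑ u, ∑ v, (m u v : ℝ) * (f u - f v) ^ 2 := by
  have hdpos : ∀ v ∈ Finset.univ \ B, (0 : ℝ) < (((∑ u, m v u) + m v v : ℕ) : ℝ) := by
    intro v hv
    exact_mod_cast hdeg v hv
  have hW : 0 < ∑ v ∈ Finset.univ \ B, (((∑ u, m v u) + m v v : ℕ) : ℝ) :=
    Finset.sum_pos hdpos hint
  set W := ∑ v ∈ Finset.univ \ B, (((∑ u, m v u) + m v v : ℕ) : ℝ) with hWdef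
  have key := cheeger m hsymm (Finset.univ \ B) (fun v => (((∑ u, m v u) + m v v : ℕ) : ℝ))
    (C₀ ^ (-1 / α) * W ^ (1 / α - 1)) (by positivity)
    (fun v _ => by
      push_cast
      linarith [Nat.cast_nonneg (α := ℝ) (m v v)])
    (linear_iso_of_connected m (Finset.univ \ B) _ _ fun A hA hne hc =>
      linear_of_isoperimetric hα hC₀ (Finset.sum_pos (fun v hv => hdpos v (hA hv)) hne)
        (Finset.sum_le_sum_of_subset_of_nonneg hA fun v _ _ => Nat.cast_nonneg _)
        (by positivity) (hiso A hA hne hc))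
    f (fun v hv => hf v (by simpa using hv))
  have hsq : (C₀ ^ (-1 / α) * W ^ (1 / α - 1)) ^ 2 = C₀ ^ (-2 / α) * W ^ (2 / α - 2) := by
    rw [mul_pow, ← Real.rpow_mul_natCast hC₀.le, ← Real.rpow_mul_natCast hW.le]
    congr 2 <;> push_cast <;> ring
  rw [hsq, ← mul_assoc] at key
  exact key
end

section
/- Let (V, m, B) be a finite Dirichlet multigraph with V° := V \ B nonempty and no self-loops (m v v = 0 for all v). Let λ > 0 be a real number and f : V → ℝ a nonnegative Dirichlet eigenfunction with eigenvalue λ, meaning: f(v) = 0 for all v ∈ B, f(v) ≥ 0 for all v, and for every v ∈ V°, Σ_u m v u * f u = (1 − λ) * deg(v) * f(v). Suppose v₀ ∈ V° satisfies f(v₀) = 1 and f(v) ≤ 1 for all v. Then: (a) for every walk w₀ = v₀, w₁, ..., w_k with m w_t w_{t+1} > 0 for each step and w_k ∈ B, one has Σ_{t=0}^{k−1} |f(w_t) − f(w_{t+1})| ≥ 1; and (b) E(f) = λ * Σ_{v ∈ V°} deg(v) * (f v)^2, and consequently E(f) ≤ λ * vol(V°). -/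
open Finset

/-!
Part (a) is the triangle inequality: the increments along the walk sum to at least
`|f v₀ - f (w k)| = |1 - 0|`.  Part (b) is summation by parts (`half_energy_eq`), which writes the
energy as `∑ u, f u * ∑ v, m u v * (f u - f v)`.  Boundary terms vanish because `f = 0` there, and
at an interior vertex the eigenvalue equation, in the absence of loops, turns the inner sum into
`λ * deg u * f u`.  The volume bound follows from `0 ≤ f ≤ 1`.
-/

/-- Discrete Green identity for a symmetric weight. -/
lemma half_energy_eq {V : Type*} [Fintype V] (c : V → V → ℝ) (hc : ∀ u v, c u v = c v u)
    (f : V → ℝ) :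
    (1 / 2) * ∑ u, ∑ v, c u v * (f u - f v) ^ 2 = ∑ u, f u * ∑ v, c u v * (f u - f v) := by
  have hsplit : ∑ u, ∑ v, c u v * (f u - f v) ^ 2
      = ∑ u, ∑ v, f u * (c u v * (f u - f v)) + ∑ u, ∑ v, f v * (c v u * (f v - f u)) := by
    simp only [← Finset.sum_add_distrib]
    refine Finset.sum_congr rfl fun u _ => Finset.sum_congr rfl fun v _ => ?_
    rw [hc v u]
    ring
  rw [hsplit, Finset.sum_comm (f := fun u v => f v * (c v u * (f v - f u)))]
  simp only [Finset.mul_sum]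
  ring

/-- **Dirichlet extremal-length inversion.**
Let `(V, m, B)` be a finite Dirichlet multigraph with nonempty boundary `B`,
nonempty interior `V° = V \ B`, and no self-loops.  Let `λ > 0` and let
`f : V → ℝ` be a nonnegative Dirichlet eigenfunction with eigenvalue `λ`
(`f = 0` on `B`, `f ≥ 0`, and `∑_u m v u · f u = (1 − λ) · deg(v) · f v` for
`v ∈ V°`), normalised so that `f(v₀) = 1 = max f` at some `v₀ ∈ V°`.  Then:
(a) along every walk from `v₀` to `B` through edges of positive multiplicity,
the increments of `f` sum to at least `1`; and
(b) `E(f) = λ · ∑_{v ∈ V°} deg(v) f(v)²`, hence `E(f) ≤ λ · vol(V°)`. -/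
theorem dirichlet_extremal_length_inversion
    {V : Type*} [Fintype V] [DecidableEq V]
    (m : V → V → ℕ) (hsymm : ∀ u v, m u v = m v u)
    (hnoloop : ∀ v, m v v = 0)
    (B : Finset V) (hBne : B.Nonempty) (hint : (Finset.univ \ B).Nonempty)
    (lam : ℝ) (hlam : 0 < lam)
    (f : V → ℝ)
    (hfB : ∀ v ∈ B, f v = 0)
    (hfpos : ∀ v, 0 ≤ f v)
    (heig : ∀ v ∈ Finset.univ \ B,
      ∑ u, (m v u : ℝ) * f u
        = (1 - lam) * (((∑ u, m v u) + m v v : ℕ) : ℝ) * f v)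
    (v₀ : V) (hv₀ : v₀ ∈ Finset.univ \ B) (hfv₀ : f v₀ = 1)
    (hfle : ∀ v, f v ≤ 1) :
    (∀ (k : ℕ) (w : ℕ → V), w 0 = v₀ →
        (∀ t < k, 0 < m (w t) (w (t + 1))) → w k ∈ B →
        1 ≤ ∑ t ∈ Finset.range k, |f (w t) - f (w (t + 1))|) ∧
    ((1 / 2) * ∑ u, ∑ v, (m u v : ℝ) * (f u - f v) ^ 2
        = lam * ∑ v ∈ Finset.univ \ B,
            (((∑ u, m v u) + m v v : ℕ) : ℝ) * (f v) ^ 2) ∧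
    ((1 / 2) * ∑ u, ∑ v, (m u v : ℝ) * (f u - f v) ^ 2
        ≤ lam * ∑ v ∈ Finset.univ \ B, (((∑ u, m v u) + m v v : ℕ) : ℝ)) := by
  have energy_eq : (1 / 2) * ∑ u, ∑ v, (m u v : ℝ) * (f u - f v) ^ 2
      = lam * ∑ v ∈ Finset.univ \ B,
          (((∑ u, m v u) + m v v : ℕ) : ℝ) * (f v) ^ 2 := by
    rw [half_energy_eq (fun u v => (m u v : ℝ)) (fun u v => by rw [hsymm]) f, Finset.mul_sum]
    symm
    apply Finset.sum_subset_zero_on_sdiff (Finset.subset_univ _)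
    · intro v hv
      have hvB : v ∈ B := by simpa using hv
      simp [hfB v hvB]
    · intro v hv
      have h := heig v hv
      simp only [mul_sub, Finset.sum_sub_distrib, ← Finset.sum_mul]
      rw [h]
      simp only [hnoloop, add_zero, Nat.cast_sum]
      ring
  refine ⟨?_, energy_eq, ?_⟩
  · intro k w hw0 _ hwk
    have h := dist_le_range_sum_dist (fun t => f (w t)) k
    simpa [Real.dist_eq, hw0, hfv₀, hfB _ hwk] using h
  · rw [energy_eq]
    refine mul_le_mul_of_nonneg_left (Finset.sum_le_sum fun v _ => ?_) hlam.le
    exact mul_le_of_le_one_right (Nat.cast_nonneg _) (pow_le_one₀ (hfpos v) (hfle v))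
end

section
/- Let V be a finite nonempty type and m : V → V → ℕ a symmetric multiplicity function such that the simple graph on V in which u is adjacent to v iff u ≠ v and m u v > 0 is connected. Then for every function h : V → ℝ and every nonempty subset S ⊆ V, writing avg_S h := (1/|S|) * Σ_{s ∈ S} h(s), one has Σ_{v ∈ V} (h(v) − avg_S h)^2 ≤ |V|^2 * ((1/2) Σ_{u ∈ V} Σ_{v ∈ V} m u v * (h u − h v)^2). -/
/-!
Any two vertices `v`, `s` are joined by a path of length `l < |V|`. By Cauchy–Schwarz along the
path, `(h v - h s)²` is at most `l` times the sum of the squared increments of `h` over its edges,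
and since the edges are distinct and each has multiplicity at least one, that sum is at most the
Dirichlet energy `E` (`sq_sub_le_length_mul_energyOn`). Hence `(h v - h s)² ≤ |V| E`; Jensen's
inequality in `s ∈ S` gives `(h v - avg_S h)² ≤ |V| E`, and summing over `v` costs another
factor `|V|`.
-/

open Finset

/-- Dirichlet energy of `h` on the sub-multigraph induced on `T`; the factor `1 / 2` compensates
for summing over ordered pairs. -/
noncomputable def energyOn {V : Type*} (m : V → V → ℕ) (h : V → ℝ) (T : Finset V) : ℝ :=
  (1 / 2) * ∑ u ∈ T, ∑ v ∈ T, (m u v : ℝ) * (h u - h v) ^ 2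

lemma energyOn_mono {V : Type*} (m : V → V → ℕ) (h : V → ℝ) {T U : Finset V} (hTU : T ⊆ U) :
    energyOn m h T ≤ energyOn m h U := by
  unfold energyOn
  refine mul_le_mul_of_nonneg_left ?_ (by norm_num)
  calc ∑ u ∈ T, ∑ v ∈ T, (m u v : ℝ) * (h u - h v) ^ 2
      ≤ ∑ u ∈ T, ∑ v ∈ U, (m u v : ℝ) * (h u - h v) ^ 2 :=
        sum_le_sum fun u _ => sum_le_sum_of_subset_of_nonneg hTU fun v _ _ => by positivity
    _ ≤ ∑ u ∈ U, ∑ v ∈ U, (m u v : ℝ) * (h u - h v) ^ 2 :=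
        sum_le_sum_of_subset_of_nonneg hTU fun u _ _ => sum_nonneg fun v _ => by positivity

/-- Attaching a new vertex `u` by an edge to `w ∈ T` raises the energy by at least the squared
increment along that edge. -/
lemma energyOn_insert_ge {V : Type*} [DecidableEq V] (m : V → V → ℕ)
    (hsymm : ∀ u v, m u v = m v u) (h : V → ℝ) {T : Finset V} {u w : V}
    (hu : u ∉ T) (hw : w ∈ T) (hm : 0 < m u w) :
    energyOn m h T + (h u - h w) ^ 2 ≤ energyOn m h (insert u T) := by
  have hm1 : (1 : ℝ) ≤ m u w := by exact_mod_cast hm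
  have hrow : (h u - h w) ^ 2 ≤ ∑ v ∈ T, (m u v : ℝ) * (h u - h v) ^ 2 :=
    (le_mul_of_one_le_left (sq_nonneg _) hm1).trans
      (single_le_sum (f := fun v => (m u v : ℝ) * (h u - h v) ^ 2)
        (fun v _ => by positivity) hw)
  have hcol : ∑ v ∈ T, (m v u : ℝ) * (h v - h u) ^ 2
      = ∑ v ∈ T, (m u v : ℝ) * (h u - h v) ^ 2 :=
    sum_congr rfl fun v _ => by rw [hsymm v u]; ring
  have hexp : energyOn m h (insert u T)
      = energyOn m h T + ∑ v ∈ T, (m u v : ℝ) * (h u - h v) ^ 2 := by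
    unfold energyOn
    simp only [sum_insert hu, sum_add_distrib, hcol]
    ring
  linarith

/-- Cauchy–Schwarz along a path: each edge of the path contributes to the energy on its support. -/
lemma sq_sub_le_length_mul_energyOn {V : Type*} [DecidableEq V] (m : V → V → ℕ)
    (hsymm : ∀ u v, m u v = m v u) (h : V → ℝ) {u v : V}
    (p : (SimpleGraph.fromRel fun u v : V => 0 < m u v).Walk u v) (hp : p.IsPath) :
    (h u - h v) ^ 2 ≤ (p.length : ℝ) * energyOn m h p.support.toFinset := by
  induction p with
  | nil => simp
  | @cons u w v hadj p ih =>
    rw [SimpleGraph.Walk.cons_isPath_iff] at hp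
    have hq := ih hp.1
    have hm : 0 < m u w := by
      rw [SimpleGraph.fromRel_adj] at hadj
      exact hadj.2.elim id fun hwu => hsymm u w ▸ hwu
    have hE := energyOn_insert_ge m hsymm h (T := p.support.toFinset)
      (by simpa using hp.2) (by simp) hm
    rw [SimpleGraph.Walk.length_cons, SimpleGraph.Walk.support_cons, List.toFinset_cons]
    push_cast
    have hq0 : 0 ≤ energyOn m h p.support.toFinset := by unfold energyOn; positivity
    generalize energyOn m h p.support.toFinset = q at *
    have hl : (0 : ℝ) ≤ p.length := Nat.cast_nonneg _
    generalize (p.length : ℝ) = l at *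
    -- AM–GM for the cross term, with `a = h u - h w`, `b = h w - h v`:
    -- `(2ab)² ≤ 4 a² l q ≤ (q + l a²)²`.
    have hcross : 2 * (h u - h w) * (h w - h v) ≤ q + l * (h u - h w) ^ 2 := by
      refine le_of_abs_le (abs_le_of_sq_le_sq ?_ (by positivity))
      nlinarith [mul_le_mul_of_nonneg_left hq (sq_nonneg (h u - h w)),
        sq_nonneg (q - l * (h u - h w) ^ 2)]
    calc (h u - h v) ^ 2
        = (h u - h w) ^ 2 + 2 * (h u - h w) * (h w - h v) + (h w - h v) ^ 2 := by ring
      _ ≤ (l + 1) * (q + (h u - h w) ^ 2) := by linarith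
      _ ≤ _ := mul_le_mul_of_nonneg_left hE (by positivity)

/-- **Discrete Poincaré inequality on a finite connected multigraph.**
Let `V` be a finite nonempty type and `m : V → V → ℕ` symmetric, such that the
simple graph with `u ~ v ↔ u ≠ v ∧ m u v > 0` is connected.  Then for every
`h : V → ℝ` and every nonempty `S ⊆ V`, writing `avg_S h` for the mean of `h`
over `S`,
`∑_v (h v − avg_S h)² ≤ |V|² · ((1/2) ∑_{u,v} m u v (h u − h v)²)`. -/
theorem discrete_poincare_multigraph
    {V : Type*} [Fintype V] [DecidableEq V] [Nonempty V]
    (m : V → V → ℕ) (hsymm : ∀ u v, m u v = m v u)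
    (hconn : (SimpleGraph.fromRel fun u v : V => 0 < m u v).Connected)
    (h : V → ℝ) (S : Finset V) (hS : S.Nonempty) :
    ∑ v, (h v - (1 / (S.card : ℝ)) * ∑ s ∈ S, h s) ^ 2
      ≤ (Fintype.card V : ℝ) ^ 2
        * ((1 / 2) * ∑ u, ∑ v, (m u v : ℝ) * (h u - h v) ^ 2) := by
  have hE : energyOn m h univ = (1 / 2) * ∑ u, ∑ v, (m u v : ℝ) * (h u - h v) ^ 2 := rfl
  rw [← hE]
  have hE0 : 0 ≤ energyOn m h univ := by unfold energyOn; positivity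
  have hpair : ∀ v s, (h v - h s) ^ 2 ≤ (Fintype.card V : ℝ) * energyOn m h univ := by
    intro v s
    obtain ⟨p, hp⟩ := hconn.exists_isPath v s
    refine (sq_sub_le_length_mul_energyOn m hsymm h p hp).trans ?_
    have hlen : (p.length : ℝ) ≤ Fintype.card V := by exact_mod_cast hp.length_lt.le
    exact mul_le_mul hlen (energyOn_mono m h (subset_univ _))
      (by unfold energyOn; positivity) (by positivity)
  have hc : (0 : ℝ) < S.card := by exact_mod_cast hS.card_pos
  have hvert : ∀ v, (h v - (1 / (S.card : ℝ)) * ∑ s ∈ S, h s) ^ 2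
      ≤ (Fintype.card V : ℝ) * energyOn m h univ := by
    intro v
    have hmean : h v - (1 / (S.card : ℝ)) * ∑ s ∈ S, h s = (∑ s ∈ S, (h v - h s)) / S.card := by
      rw [sum_sub_distrib, sum_const, nsmul_eq_mul]
      field_simp
    rw [hmean]
    calc ((∑ s ∈ S, (h v - h s)) / S.card) ^ 2
        ≤ (∑ s ∈ S, (h v - h s) ^ 2) / S.card := by
          rw [div_pow, div_le_div_iff₀ (by positivity) hc]
          nlinarith [sq_sum_le_card_mul_sum_sq (s := S) (f := fun s => h v - h s)]
      _ ≤ _ := by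
        rw [div_le_iff₀ hc, mul_comm _ (S.card : ℝ), ← nsmul_eq_mul]
        exact sum_le_card_nsmul _ _ _ fun s _ => hpair v s
  calc ∑ v, (h v - (1 / (S.card : ℝ)) * ∑ s ∈ S, h s) ^ 2
      ≤ ∑ _v : V, (Fintype.card V : ℝ) * energyOn m h univ := sum_le_sum fun v _ => hvert v
    _ = (Fintype.card V : ℝ) ^ 2 * energyOn m h univ := by
      rw [sum_const, card_univ, nsmul_eq_mul]
      ring
end

section
/- Let p, q ≥ 2 be integers. For a function f : ℤ × ℤ → ℝ satisfying f(i,j) = 0 whenever i ≤ 0 or i ≥ p or j ≤ 0 or j ≥ q, define the grid Dirichlet energy E(f) := Σ_{i=0}^{p−1} Σ_{j=0}^{q} (f(i+1,j) − f(i,j))^2 + Σ_{i=0}^{p} Σ_{j=0}^{q−1} (f(i,j+1) − f(i,j))^2 and the weighted norm N(f) := 4 * Σ_{i=1}^{p−1} Σ_{j=1}^{q−1} f(i,j)^2. Then 1 − (cos(π/p) + cos(π/q))/2 is the minimum of the set of Rayleigh quotients { E(f)/N(f) : f as above, f not identically zero }; equivalently, E(f) ≥ (1 − (cos(π/p) +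 cos(π/q))/2) * N(f) for every such f, with equality attained by the nonzero function f(i,j) = sin(π i / p) * sin(π j / q) (extended by zero). -/
/-! The energy splits into one-dimensional path energies along the grid lines, so everything reduces to
the path `0, …, n` with zero boundary values, where the claim is
`∑ (g (i+1) - g i)² ≥ (2 - 2 cos (π/n)) ∑ g i²` (`path_lower`). This follows from a discrete Picone
argument: the sine `s i = sin (π i / n)` is positive inside the path and satisfies
`s (i+1) + s (i-1) = 2 cos (π/n) s i`, so bounding each cross term by
`2 g i g (i+1) ≤ (s (i+1) / s i) (g i)² + (s i / s (i+1)) (g (i+1))²` makes the sum telescope.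
For `g = s` equality holds (`path_sine_eq`). Summing over the horizontal and the vertical lines
gives the factor `(2 - 2 cos (π/p)) + (2 - 2 cos (π/q))`, four times the stated eigenvalue, and the
product of sines is extremal along every line.
-/

open Finset

/-- Grid Dirichlet energy of `f` on the `(p × q)`-cell rectangular grid:
sum of squared horizontal differences over `0 ≤ i ≤ p−1`, `0 ≤ j ≤ q`, plus
squared vertical differences over `0 ≤ i ≤ p`, `0 ≤ j ≤ q−1`. -/
noncomputable def gridE (p q : ℕ) (f : ℤ × ℤ → ℝ) : ℝ :=
  (∑ i ∈ Finset.range p, ∑ j ∈ Finset.range (q + 1),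
      (f ((i : ℤ) + 1, (j : ℤ)) - f ((i : ℤ), (j : ℤ))) ^ 2)
    + ∑ i ∈ Finset.range (p + 1), ∑ j ∈ Finset.range q,
        (f ((i : ℤ), (j : ℤ) + 1) - f ((i : ℤ), (j : ℤ))) ^ 2

/-- Degree-4 weighted squared norm of `f` over the interior vertices
`1 ≤ i ≤ p−1`, `1 ≤ j ≤ q−1`. -/
noncomputable def gridN (p q : ℕ) (f : ℤ × ℤ → ℝ) : ℝ :=
  4 * ∑ i ∈ Finset.Icc 1 (p - 1), ∑ j ∈ Finset.Icc 1 (q - 1),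
        (f ((i : ℤ), (j : ℤ))) ^ 2

/-- The discrete sine product `sin(πi/p)·sin(πj/q)` extended by zero outside
`{0,…,p} × {0,…,q}`. -/
noncomputable def gridSine (p q : ℕ) : ℤ × ℤ → ℝ := fun z =>
  if 0 ≤ z.1 ∧ z.1 ≤ (p : ℤ) ∧ 0 ≤ z.2 ∧ z.2 ≤ (q : ℤ) then
    Real.sin (Real.pi * (z.1 : ℝ) / (p : ℝ)) * Real.sin (Real.pi * (z.2 : ℝ) / (q : ℝ))
  else 0

lemma sine_pos (n k : ℕ) (hk : 0 < k) (hkn : k < n) : 0 < Real.sin (Real.pi * k / n) := by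
  have hk' : (0 : ℝ) < k := by exact_mod_cast hk
  have hkn' : (k : ℝ) < n := by exact_mod_cast hkn
  have hn : (0 : ℝ) < n := hk'.trans hkn'
  apply Real.sin_pos_of_pos_of_lt_pi
  · positivity
  · rw [div_lt_iff₀ hn]
    exact mul_lt_mul_of_pos_left hkn' Real.pi_pos

/-- The sine is an eigenfunction of the path: the three-term recurrence. -/
lemma sine_recurrence (n : ℕ) (x : ℝ) :
    Real.sin (Real.pi * (x + 1) / n) + Real.sin (Real.pi * (x - 1) / n)
      = 2 * Real.cos (Real.pi / n) * Real.sin (Real.pi * x / n) := by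
  rw [show Real.pi * (x + 1) / n = Real.pi * x / n + Real.pi / n by ring,
    show Real.pi * (x - 1) / n = Real.pi * x / n - Real.pi / n by ring,
    Real.sin_add, Real.sin_sub]
  ring

/-- Discrete Picone argument: the sum over the first `k + 1` edges is bounded below by a
boundary term whose coefficient is the relative increment of the positive sine solution across the
last edge. -/
lemma path_partial_lower (n : ℕ) (g : ℕ → ℝ) (h0 : g 0 = 0) (k : ℕ)
    (hk : k + 1 < n) :
    g (k + 1) ^ 2 * (1 - Real.sin (Real.pi * k / n) / Real.sin (Real.pi * (k + 1) / n))
      ≤ ∑ i ∈ range (k + 1),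
        ((g (i + 1) - g i) ^ 2 - (2 - 2 * Real.cos (Real.pi / n)) * g i ^ 2) := by
  induction k with
  | zero => simp [h0]
  | succ k ih =>
    rw [sum_range_succ]
    have ih := ih (by omega)
    have hs := sine_recurrence n (k + 1)
    have h1 : 0 < Real.sin (Real.pi * (k + 1) / n) := by
      have := sine_pos n (k + 1) (by omega) (by omega)
      push_cast at this
      exact this
    have h2 : 0 < Real.sin (Real.pi * (k + 1 + 1) / n) := by
      have := sine_pos n (k + 1 + 1) (by omega) (by omega)
      push_cast at this
      exact this
    rw [add_sub_cancel_right] at hs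
    push_cast
    set a := Real.sin (Real.pi * k / n)
    set b := Real.sin (Real.pi * (k + 1) / n)
    set d := Real.sin (Real.pi * (k + 1 + 1) / n)
    set c := Real.cos (Real.pi / n)
    have ha : a / b = 2 * c - d / b := by
      field_simp
      linarith
    rw [ha] at ih
    -- The weighted arithmetic-geometric mean inequality with weights `d / b` and `b / d`.
    have hamgm : 0 ≤ d / b * (g (k + 1) - b / d * g (k + 1 + 1)) ^ 2 := by positivity
    have hexp : d / b * (g (k + 1) - b / d * g (k + 1 + 1)) ^ 2
        = d / b * g (k + 1) ^ 2 - 2 * g (k + 1) * g (k + 1 + 1)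
          + b / d * g (k + 1 + 1) ^ 2 := by
      field_simp
      ring
    rw [hexp] at hamgm
    linarith

lemma path_lower (n : ℕ) (hn : 2 ≤ n) (g : ℕ → ℝ) (h0 : g 0 = 0) (hgn : g n = 0) :
    (2 - 2 * Real.cos (Real.pi / n)) * ∑ i ∈ range n, g i ^ 2
      ≤ ∑ i ∈ range n, (g (i + 1) - g i) ^ 2 := by
  obtain ⟨k, rfl⟩ : ∃ k, n = k + 2 := ⟨n - 2, by omega⟩
  have h := path_partial_lower (k + 2) g h0 k (by omega)
  have h1 : 0 < Real.sin (Real.pi * (k + 1) / (k + 2 : ℕ)) := by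
    have := sine_pos (k + 2) (k + 1) (by omega) (by omega)
    push_cast at this ⊢
    exact this
  have hs := sine_recurrence (k + 2) (k + 1)
  -- The sine vanishes at the right endpoint, so the recurrence there gives the ratio
  -- `2 cos (π / (k + 2))` for the two preceding values.
  have h2 : Real.sin (Real.pi * ((k : ℝ) + 1 + 1) / (k + 2 : ℕ)) = 0 := by
    rw [← Real.sin_pi]
    congr 1
    push_cast
    field_simp
    ring
  rw [add_sub_cancel_right, h2, zero_add] at hs
  rw [hs, mul_div_assoc, div_self h1.ne'] at h
  rw [sum_sub_distrib, ← mul_sum] at h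
  rw [sum_range_succ _ (k + 1), sum_range_succ _ (k + 1), mul_add, hgn]
  linarith

lemma path_sine_eq (n : ℕ) (hn : 2 ≤ n) :
    ∑ i ∈ range n, (Real.sin (Real.pi * ((i : ℝ) + 1) / n) - Real.sin (Real.pi * i / n)) ^ 2
      = (2 - 2 * Real.cos (Real.pi / n)) * ∑ i ∈ range n, Real.sin (Real.pi * i / n) ^ 2 := by
  have key : ∀ k : ℕ, ∑ i ∈ range k,
      ((Real.sin (Real.pi * ((i : ℝ) + 1) / n) - Real.sin (Real.pi * i / n)) ^ 2
        - (2 - 2 * Real.cos (Real.pi / n)) * Real.sin (Real.pi * i / n) ^ 2)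
      = Real.sin (Real.pi * k / n)
        * (Real.sin (Real.pi * k / n) - Real.sin (Real.pi * ((k : ℝ) - 1) / n)) := by
    intro k
    induction k with
    | zero => simp
    | succ k ih =>
      rw [sum_range_succ, ih]
      push_cast
      rw [add_sub_cancel_right]
      linear_combination (-Real.sin (Real.pi * k / n)) * sine_recurrence n k
  have h := key n
  have hn0 : (n : ℝ) ≠ 0 := by positivity
  rw [mul_div_cancel_right₀ _ hn0, Real.sin_pi, zero_mul, sum_sub_distrib, ← mul_sum] at h
  linarith

lemma sum_Icc_eq_range (n : ℕ) (hn : 2 ≤ n) (g : ℕ → ℝ) (h0 : g 0 = 0) :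
    ∑ i ∈ Icc 1 (n - 1), g i = ∑ i ∈ range n, g i := by
  apply sum_subset
  · intro i hi
    simp only [mem_Icc, mem_range] at *
    omega
  · intro i hi hi'
    simp only [mem_Icc, mem_range] at *
    rw [show i = 0 by omega, h0]

/-- The norm written over `range p × range q`, for functions with Dirichlet boundary values. -/
lemma gridN_eq (p q : ℕ) (hp : 2 ≤ p) (hq : 2 ≤ q) (f : ℤ × ℤ → ℝ)
    (hf : ∀ i j : ℤ, (i ≤ 0 ∨ (p : ℤ) ≤ i ∨ j ≤ 0 ∨ (q : ℤ) ≤ j) → f (i, j) = 0) :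
    gridN p q f = 4 * ∑ i ∈ range p, ∑ j ∈ range q, f ((i : ℤ), (j : ℤ)) ^ 2 := by
  unfold gridN
  congr 1
  rw [← sum_Icc_eq_range p hp]
  · refine sum_congr rfl fun i _ => sum_Icc_eq_range q hq _ ?_
    rw [hf _ _ (by simp)]
    simp
  · refine sum_eq_zero fun j _ => ?_
    rw [hf _ _ (by simp)]
    simp

/-- Including the column `j = q`, where the function vanishes, does not change the norm. -/
lemma sum_columns (p q : ℕ) (f : ℤ × ℤ → ℝ)
    (hf : ∀ i j : ℤ, (i ≤ 0 ∨ (p : ℤ) ≤ i ∨ j ≤ 0 ∨ (q : ℤ) ≤ j) → f (i, j) = 0) :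
    ∑ j ∈ range (q + 1), ∑ i ∈ range p, f ((i : ℤ), (j : ℤ)) ^ 2
      = ∑ i ∈ range p, ∑ j ∈ range q, f ((i : ℤ), (j : ℤ)) ^ 2 := by
  rw [sum_range_succ, sum_comm, add_eq_left]
  refine sum_eq_zero fun i _ => ?_
  rw [hf _ _ (by simp)]
  simp

/-- Including the row `i = p`, where the function vanishes, does not change the norm. -/
lemma sum_rows (p q : ℕ) (f : ℤ × ℤ → ℝ)
    (hf : ∀ i j : ℤ, (i ≤ 0 ∨ (p : ℤ) ≤ i ∨ j ≤ 0 ∨ (q : ℤ) ≤ j) → f (i, j) = 0) :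
    ∑ i ∈ range (p + 1), ∑ j ∈ range q, f ((i : ℤ), (j : ℤ)) ^ 2
      = ∑ i ∈ range p, ∑ j ∈ range q, f ((i : ℤ), (j : ℤ)) ^ 2 := by
  rw [sum_range_succ, add_eq_left]
  refine sum_eq_zero fun i _ => ?_
  rw [hf _ _ (by simp)]
  simp

lemma gridSine_of_mem (p q i j : ℕ) (hi : i ≤ p) (hj : j ≤ q) :
    gridSine p q ((i : ℤ), (j : ℤ))
      = Real.sin (Real.pi * i / p) * Real.sin (Real.pi * j / q) := by
  simp [gridSine, hi, hj]

lemma gridSine_boundary (p q : ℕ) (hp : 2 ≤ p) (hq : 2 ≤ q) (i j : ℤ)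
    (h : i ≤ 0 ∨ (p : ℤ) ≤ i ∨ j ≤ 0 ∨ (q : ℤ) ≤ j) : gridSine p q (i, j) = 0 := by
  have hp0 : (p : ℝ) ≠ 0 := by positivity
  have hq0 : (q : ℝ) ≠ 0 := by positivity
  unfold gridSine
  split_ifs with hz
  · obtain ⟨h1, h2, h3, h4⟩ := hz
    dsimp only at *
    rcases h with h | h | h | h
    · simp [le_antisymm h h1]
    · simp [le_antisymm h2 h, mul_div_cancel_right₀ _ hp0]
    · simp [le_antisymm h h3]
    · simp [le_antisymm h4 h, mul_div_cancel_right₀ _ hq0]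
  · rfl

/-- **First Dirichlet eigenvalue of the `p × q` rectangular grid.**
For integers `p, q ≥ 2`, and for every `f : ℤ × ℤ → ℝ` vanishing whenever
`i ≤ 0`, `i ≥ p`, `j ≤ 0`, or `j ≥ q`, one has
`(1 − (cos(π/p) + cos(π/q))/2) · N(f) ≤ E(f)`, and equality is attained by
the nonzero function `f(i,j) = sin(πi/p)·sin(πj/q)` (extended by zero).
Hence `1 − (cos(π/p) + cos(π/q))/2` is the minimum of the Rayleigh quotients
`E(f)/N(f)` over admissible nonzero `f`. -/
theorem grid_first_dirichlet_eigenvalue (p q : ℕ) (hp : 2 ≤ p) (hq : 2 ≤ q) :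
    (∀ f : ℤ × ℤ → ℝ,
      (∀ i j : ℤ, (i ≤ 0 ∨ (p : ℤ) ≤ i ∨ j ≤ 0 ∨ (q : ℤ) ≤ j) → f (i, j) = 0) →
      (1 - (Real.cos (Real.pi / p) + Real.cos (Real.pi / q)) / 2) * gridN p q f
        ≤ gridE p q f) ∧
    (∀ i j : ℤ, (i ≤ 0 ∨ (p : ℤ) ≤ i ∨ j ≤ 0 ∨ (q : ℤ) ≤ j) → gridSine p q (i, j) = 0) ∧
    gridSine p q ≠ 0 ∧
    gridE p q (gridSine p q)
      = (1 - (Real.cos (Real.pi / p) + Real.cos (Real.pi / q)) / 2)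
          * gridN p q (gridSine p q) := by
  refine ⟨fun f hf => ?_, gridSine_boundary p q hp hq, fun h => ?_, ?_⟩
  · unfold gridE
    rw [sum_comm, gridN_eq p q hp hq f hf]
    have h1 : ∑ j ∈ range (q + 1), (2 - 2 * Real.cos (Real.pi / p))
          * ∑ i ∈ range p, f ((i : ℤ), (j : ℤ)) ^ 2
        ≤ ∑ j ∈ range (q + 1), ∑ i ∈ range p,
          (f ((i : ℤ) + 1, (j : ℤ)) - f ((i : ℤ), (j : ℤ))) ^ 2 := by
      refine sum_le_sum fun j _ => ?_
      have := path_lower p hp (fun i => f ((i : ℤ), (j : ℤ)))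
        (hf _ _ (by simp)) (hf _ _ (by simp))
      push_cast at this
      exact this
    have h2 : ∑ i ∈ range (p + 1), (2 - 2 * Real.cos (Real.pi / q))
          * ∑ j ∈ range q, f ((i : ℤ), (j : ℤ)) ^ 2
        ≤ ∑ i ∈ range (p + 1), ∑ j ∈ range q,
          (f ((i : ℤ), (j : ℤ) + 1) - f ((i : ℤ), (j : ℤ))) ^ 2 := by
      refine sum_le_sum fun i _ => ?_
      have := path_lower q hq (fun j => f ((i : ℤ), (j : ℤ)))
        (hf _ _ (by simp)) (hf _ _ (by simp))
      push_cast at this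
      exact this
    rw [← mul_sum, sum_columns p q f hf] at h1
    rw [← mul_sum, sum_rows p q f hf] at h2
    linarith
  · have h11 := congrFun h (((1 : ℕ) : ℤ), ((1 : ℕ) : ℤ))
    rw [gridSine_of_mem p q 1 1 (by omega) (by omega)] at h11
    exact (mul_pos (sine_pos p 1 one_pos (by omega)) (sine_pos q 1 one_pos (by omega))).ne' h11
  · have hf := gridSine_boundary p q hp hq
    unfold gridE
    rw [sum_comm, gridN_eq p q hp hq _ hf]
    have h1 : ∑ j ∈ range (q + 1), ∑ i ∈ range p,
          (gridSine p q ((i : ℤ) + 1, (j : ℤ)) - gridSine p q ((i : ℤ), (j : ℤ))) ^ 2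
        = ∑ j ∈ range (q + 1), (2 - 2 * Real.cos (Real.pi / p))
          * ∑ i ∈ range p, gridSine p q ((i : ℤ), (j : ℤ)) ^ 2 := by
      refine sum_congr rfl fun j hj => ?_
      have hj' : j ≤ q := by simpa [Nat.lt_succ_iff] using hj
      have e1 : ∀ i ∈ range p,
          (gridSine p q ((i : ℤ) + 1, (j : ℤ)) - gridSine p q ((i : ℤ), (j : ℤ))) ^ 2
          = (Real.sin (Real.pi * ((i : ℝ) + 1) / p) - Real.sin (Real.pi * i / p)) ^ 2
            * Real.sin (Real.pi * j / q) ^ 2 := by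
        intro i hi
        have hi' := mem_range.1 hi
        have := gridSine_of_mem p q (i + 1) j (by omega) hj'
        push_cast at this
        rw [this, gridSine_of_mem p q i j hi'.le hj']
        ring
      have e2 : ∀ i ∈ range p, gridSine p q ((i : ℤ), (j : ℤ)) ^ 2
          = Real.sin (Real.pi * i / p) ^ 2 * Real.sin (Real.pi * j / q) ^ 2 := by
        intro i hi
        rw [gridSine_of_mem p q i j (mem_range.1 hi).le hj', mul_pow]
      rw [sum_congr rfl e1, sum_congr rfl e2, ← sum_mul, ← sum_mul, path_sine_eq p hp, mul_assoc]
    have h2 : ∑ i ∈ range (p + 1), ∑ j ∈ range q,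
          (gridSine p q ((i : ℤ), (j : ℤ) + 1) - gridSine p q ((i : ℤ), (j : ℤ))) ^ 2
        = ∑ i ∈ range (p + 1), (2 - 2 * Real.cos (Real.pi / q))
          * ∑ j ∈ range q, gridSine p q ((i : ℤ), (j : ℤ)) ^ 2 := by
      refine sum_congr rfl fun i hi => ?_
      have hi' : i ≤ p := by simpa [Nat.lt_succ_iff] using hi
      have e1 : ∀ j ∈ range q,
          (gridSine p q ((i : ℤ), (j : ℤ) + 1) - gridSine p q ((i : ℤ), (j : ℤ))) ^ 2
          = Real.sin (Real.pi * i / p) ^ 2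
            * (Real.sin (Real.pi * ((j : ℝ) + 1) / q) - Real.sin (Real.pi * j / q)) ^ 2 := by
        intro j hj
        have hj' := mem_range.1 hj
        have := gridSine_of_mem p q i (j + 1) hi' (by omega)
        push_cast at this
        rw [this, gridSine_of_mem p q i j hi' hj'.le]
        ring
      have e2 : ∀ j ∈ range q, gridSine p q ((i : ℤ), (j : ℤ)) ^ 2
          = Real.sin (Real.pi * i / p) ^ 2 * Real.sin (Real.pi * j / q) ^ 2 := by
        intro j hj
        rw [gridSine_of_mem p q i j hi' (mem_range.1 hj).le, mul_pow]
      rw [sum_congr rfl e1, sum_congr rfl e2, ← mul_sum, ← mul_sum, path_sine_eq q hq]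
      ring
    rw [h1, h2, ← mul_sum, ← mul_sum, sum_columns p q _ hf, sum_rows p q _ hf]
    ring
end

section
/- Let F be the free group on two generators a and b, let p, q ≥ 2 be integers, and set w := a^p * b^q * a^{−p} * b^{−q} and r := a * b * a⁻¹ * b⁻¹. Then: (i) there exist elements c₁, …, c_{pq} ∈ F and signs ε₁, …, ε_{pq} ∈ {1, −1} such that w = Π_{i=1}^{pq} c_i * r^{ε_i} * c_i⁻¹; and (ii) whenever w = Π_{i=1}^{N} c_i * r^{ε_i} * c_i⁻¹ for some natural number N, elements c_i ∈ F, and signs ε_i ∈ {1, −1}, one has N ≥ p*q. In other words, p*q is the minimal number of conjugates of r^{±1} whose product is w in F. -/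
/-!
The upper bound comes from the commutator identities
`[a, b^(q+1)] = [a, b^q] · b^q [a, b] b^(-q)` and
`[a^(p+1), y] = a^p [a, y] a^(-p) · [a^p, y]`, which tile the `p × q` rectangle one unit
square at a time (`isConjProd_commutator`).

The lower bound uses the homomorphism from the free group to the integral Heisenberg group
sending the generators to the standard ones. The relator `r` maps to the central element `z`, so each
conjugate of `r^(±1)` maps to `z^(±1)`, and a product of `N` of them has central coordinate of
absolute value at most `N` (`Heis.prod_central`). The word `w` maps to `z^(p*q)`, so `p * q ≤ N`.
-/

/-- `g` is a product of `n` conjugates of `r`; the list records the conjugating elements. -/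
def IsConjProd {G : Type*} [Group G] (r : G) (n : ℕ) (g : G) : Prop :=
  ∃ l : List G, l.length = n ∧ (l.map fun c => c * r * c⁻¹).prod = g

namespace IsConjProd

variable {G : Type*} [Group G] {r g h : G} {m n : ℕ}

theorem mul (hg : IsConjProd r m g) (hh : IsConjProd r n h) : IsConjProd r (m + n) (g * h) := by
  obtain ⟨l, rfl, rfl⟩ := hg
  obtain ⟨k, rfl, rfl⟩ := hh
  exact ⟨l ++ k, by simp, by simp⟩

theorem conj (hg : IsConjProd r n g) (x : G) : IsConjProd r n (x * g * x⁻¹) := by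
  obtain ⟨l, rfl, rfl⟩ := hg
  refine ⟨l.map (x * ·), by simp, ?_⟩
  induction l with
  | nil => simp
  | cons c l ih =>
    simp only [List.map_cons, List.prod_cons] at ih ⊢
    rw [ih]
    group

end IsConjProd

theorem isConjProd_commutator {G : Type*} [Group G] (a b : G) (p q : ℕ) :
    IsConjProd (a * b * a⁻¹ * b⁻¹) (p * q) (a ^ p * b ^ q * (a ^ p)⁻¹ * (b ^ q)⁻¹) := by
  have row : IsConjProd (a * b * a⁻¹ * b⁻¹) q (a * b ^ q * a⁻¹ * (b ^ q)⁻¹) := by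
    induction q with
    | zero => exact ⟨[], by simp, by simp⟩
    | succ q ih =>
      have unit : IsConjProd (a * b * a⁻¹ * b⁻¹) 1 (a * b * a⁻¹ * b⁻¹) := ⟨[1], by simp, by simp⟩
      convert ih.mul (unit.conj (b ^ q)) using 1
      rw [pow_succ]
      group
  induction p with
  | zero => exact ⟨[], by simp, by simp⟩
  | succ p ih =>
    convert (row.conj (a ^ p)).mul ih using 1
    · ring
    · rw [pow_succ]
      group

/-- The integral Heisenberg group: `⟨x, y, z⟩` is the unitriangular matrix with
superdiagonal entries `x`, `y` and corner entry `z`. -/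
@[ext]
structure Heis where
  x : ℤ
  y : ℤ
  z : ℤ

namespace Heis

instance : Mul Heis := ⟨fun g h => ⟨g.x + h.x, g.y + h.y, g.z + h.z + g.x * h.y⟩⟩
instance : One Heis := ⟨⟨0, 0, 0⟩⟩
instance : Inv Heis := ⟨fun g => ⟨-g.x, -g.y, -g.z + g.x * g.y⟩⟩

@[simp] theorem mul_x (g h : Heis) : (g * h).x = g.x + h.x := rfl
@[simp] theorem mul_y (g h : Heis) : (g * h).y = g.y + h.y := rfl
@[simp] theorem mul_z (g h : Heis) : (g * h).z = g.z + h.z + g.x * h.y := rfl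
@[simp] theorem one_x : (1 : Heis).x = 0 := rfl
@[simp] theorem one_y : (1 : Heis).y = 0 := rfl
@[simp] theorem one_z : (1 : Heis).z = 0 := rfl
@[simp] theorem inv_x (g : Heis) : (g⁻¹).x = -g.x := rfl
@[simp] theorem inv_y (g : Heis) : (g⁻¹).y = -g.y := rfl
@[simp] theorem inv_z (g : Heis) : (g⁻¹).z = -g.z + g.x * g.y := rfl

instance : Group Heis :=
  Group.ofLeftAxioms
    (fun a b c => by ext <;> simp <;> ring)
    (fun a => by ext <;> simp)
    (fun a => by ext <;> simp)

theorem pow_X (n : ℕ) : (⟨1, 0, 0⟩ : Heis) ^ n = ⟨n, 0, 0⟩ := by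
  induction n with
  | zero => rfl
  | succ n ih => rw [pow_succ, ih]; ext <;> simp

theorem pow_Y (n : ℕ) : (⟨0, 1, 0⟩ : Heis) ^ n = ⟨0, n, 0⟩ := by
  induction n with
  | zero => rfl
  | succ n ih => rw [pow_succ, ih]; ext <;> simp

theorem prod_central (l : List Heis) (hl : ∀ g ∈ l, g.x = 0 ∧ g.y = 0 ∧ |g.z| ≤ 1) :
    l.prod.x = 0 ∧ l.prod.y = 0 ∧ |l.prod.z| ≤ l.length := by
  induction l with
  | nil => simp
  | cons g l ih =>
    obtain ⟨hx, hy, hz⟩ := hl g (by simp)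
    obtain ⟨ihx, ihy, ihz⟩ := ih fun k hk => hl k (by simp [hk])
    refine ⟨by simp [hx, ihx], by simp [hy, ihy], ?_⟩
    simp only [List.prod_cons, mul_z, hx, zero_mul, add_zero, List.length_cons]
    push_cast
    linarith [abs_add_le g.z l.prod.z]

/-- The homomorphism sending `a` (that is, `true`) and `b` (that is, `false`) to the standard
generators. -/
def ofFree : FreeGroup Bool →* Heis :=
  FreeGroup.lift fun t => if t then ⟨1, 0, 0⟩ else ⟨0, 1, 0⟩

@[simp] theorem ofFree_true : ofFree (FreeGroup.of true) = ⟨1, 0, 0⟩ := by simp [ofFree]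
@[simp] theorem ofFree_false : ofFree (FreeGroup.of false) = ⟨0, 1, 0⟩ := by simp [ofFree]

end Heis

/-- **Area-minimality of rectangular commutator grids (algebraic form).**
In the free group on two generators `a, b`, for integers `p, q ≥ 2`, set
`w := a^p b^q a^{−p} b^{−q}` and `r := a b a⁻¹ b⁻¹`.  Then:
(i) `w` is a product of exactly `p·q` conjugates of `r^{±1}`; and
(ii) any expression of `w` as a product of `N` conjugates of `r^{±1}` has
`N ≥ p·q`.  Thus `p·q` is the minimal number of conjugates of `r^{±1}` whose
product is `w`. -/
theorem commutator_grid_area_minimality (p q : ℕ) (hp : 2 ≤ p) (hq : 2 ≤ q) :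
    (∃ (c : Fin (p * q) → FreeGroup Bool) (ε : Fin (p * q) → ℤ),
      (∀ i, ε i = 1 ∨ ε i = -1) ∧
      (FreeGroup.of true) ^ p * (FreeGroup.of false) ^ q
          * ((FreeGroup.of true) ^ p)⁻¹ * ((FreeGroup.of false) ^ q)⁻¹
        = (List.ofFn fun i => c i
            * (FreeGroup.of true * FreeGroup.of false
                * (FreeGroup.of true)⁻¹ * (FreeGroup.of false)⁻¹) ^ (ε i)
            * (c i)⁻¹).prod) ∧
    (∀ (N : ℕ) (c : Fin N → FreeGroup Bool) (ε : Fin N → ℤ),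
      (∀ i, ε i = 1 ∨ ε i = -1) →
      (FreeGroup.of true) ^ p * (FreeGroup.of false) ^ q
          * ((FreeGroup.of true) ^ p)⁻¹ * ((FreeGroup.of false) ^ q)⁻¹
        = (List.ofFn fun i => c i
            * (FreeGroup.of true * FreeGroup.of false
                * (FreeGroup.of true)⁻¹ * (FreeGroup.of false)⁻¹) ^ (ε i)
            * (c i)⁻¹).prod →
      p * q ≤ N) := by
  constructor
  · obtain ⟨l, hl, hprod⟩ :=
      isConjProd_commutator (FreeGroup.of true) (FreeGroup.of false) p q
    refine ⟨fun i => l.get (i.cast hl.symm), fun _ => 1, fun _ => Or.inl rfl, ?_⟩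
    rw [← hprod]
    congr 1
    apply List.ext_getElem <;> simp [hl]
  · intro N c ε hε h
    have key := Heis.prod_central
      ((List.ofFn fun i => c i
            * (FreeGroup.of true * FreeGroup.of false
                * (FreeGroup.of true)⁻¹ * (FreeGroup.of false)⁻¹) ^ (ε i)
            * (c i)⁻¹).map Heis.ofFree) (by
        intro g hg
        simp only [List.mem_map, List.mem_ofFn] at hg
        obtain ⟨_, ⟨i, rfl⟩, rfl⟩ := hg
        rcases hε i with hi | hi <;> rw [hi] <;>
          simp [-mul_inv_rev, -FreeGroup.mul_mk] <;> ring_nf <;> simp)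
    have hz := key.2.2
    rw [← map_list_prod, ← h] at hz
    simp only [map_mul, map_inv, map_pow, Heis.ofFree_true, Heis.ofFree_false, Heis.pow_X,
      Heis.pow_Y, List.length_map, List.length_ofFn] at hz
    simp at hz
    exact_mod_cast hz
end

section
/- Let F be the free group on three generators a, b, t, and set r₁ := a * t * b and r₂ := b⁻¹ * t * a⁻¹. Let m ≥ 1 be a natural number. Then: (i) there exist elements c₁, …, c_{2m} ∈ F and, for each i, an element s_i ∈ {r₁, r₂, r₁⁻¹, r₂⁻¹}, such that t^{2m} = Π_{i=1}^{2m} c_i * s_i * c_i⁻¹; and (ii) whenever t^{2m} = Π_{i=1}^{N} c_i * s_i * c_i⁻¹ for some natural number N, elements c_i ∈ F, and s_i ∈ {r₁, r₂, r₁⁻¹, r₂⁻¹}, one has N ≥ 2m. In other words, 2m is the minimal number of conjugates of r₁^{±1}, r₂^{±1} whose product is t^{2m} in F. -/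
/-!
For the upper bound, conjugation by `a⁻¹` turns `r₁ = a t b` into `t b a` and `r₂ = b⁻¹ t a⁻¹` into
`(b a)⁻¹ t`, whose product is `t²`; repeating this pair `m` times gives `t^{2m}`
(`fan_prod_eq`). For the lower bound, the `t`-exponent `F → ℤ` (`tExp`) is `±1` on each conjugate of
a relator or its inverse, so a product of `N` of them has `t`-exponent at most `N`, while
`t^{2m}` has `t`-exponent `2m`.
-/

/-- The `t`-exponent homomorphism `F → ℤ`, with `t ↦ 1` and `a, b ↦ 0`. -/
def tExp : FreeGroup (Fin 3) →* Multiplicative ℤ :=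
  FreeGroup.lift fun i => Multiplicative.ofAdd (if i = 2 then 1 else 0)

/-- The relators of the alternating fan: `r₁` at even positions, `r₂` at odd ones. -/
def fanRelator (i : ℕ) : FreeGroup (Fin 3) :=
  if i % 2 = 0 then FreeGroup.of 0 * FreeGroup.of 2 * FreeGroup.of 1
  else (FreeGroup.of 1)⁻¹ * FreeGroup.of 2 * (FreeGroup.of 0)⁻¹

theorem fan_prod_eq (m : ℕ) :
    (FreeGroup.of 2 : FreeGroup (Fin 3)) ^ (2 * m)
      = (List.ofFn fun i : Fin (2 * m) =>
          (FreeGroup.of 0)⁻¹ * fanRelator i * ((FreeGroup.of 0)⁻¹)⁻¹).prod := by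
  induction m with
  | zero => simp
  | succ k ih =>
    have hper : ∀ i : ℕ, fanRelator (i + 1 + 1) = fanRelator i := fun i => by
      simp [fanRelator, Nat.add_assoc]
    change _ ^ (2 * k + 1 + 1) = (List.ofFn fun i : Fin (2 * k + 1 + 1) => _).prod
    rw [List.ofFn_succ, List.ofFn_succ, List.prod_cons, List.prod_cons]
    simp only [Fin.val_succ, hper, ← ih]
    simp only [fanRelator, Fin.val_zero, pow_succ']
    simp [mul_assoc]

theorem natAbs_tExp_prod_le (l : List (FreeGroup (Fin 3)))
    (h : ∀ x ∈ l, (tExp x).toAdd.natAbs ≤ 1) : (tExp l.prod).toAdd.natAbs ≤ l.length := by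
  induction l with
  | nil => simp
  | cons x l ih =>
    have hx := h x (by simp)
    have hl := ih fun y hy => h y (by simp [hy])
    rw [List.prod_cons, map_mul, toAdd_mul, List.length_cons]
    omega

/-- **Minimal filling of `t^{2m}` over the fan presentation (algebraic form).**
In the free group on three generators `a = of 0`, `b = of 1`, `t = of 2`, set
`r₁ := a t b` and `r₂ := b⁻¹ t a⁻¹`.  For every natural `m ≥ 1`:
(i) `t^{2m}` is a product of exactly `2m` conjugates of elements of
`{r₁, r₂, r₁⁻¹, r₂⁻¹}`; and
(ii) any expression of `t^{2m}` as a product of `N` conjugates of elements of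
`{r₁, r₂, r₁⁻¹, r₂⁻¹}` has `N ≥ 2m`.  Thus `2m` is the minimal number of such
conjugates whose product is `t^{2m}`. -/
theorem fan_presentation_filling_minimality (m : ℕ) (hm : 1 ≤ m) :
    (∃ (c : Fin (2 * m) → FreeGroup (Fin 3)) (s : Fin (2 * m) → FreeGroup (Fin 3)),
      (∀ i, s i = FreeGroup.of 0 * FreeGroup.of 2 * FreeGroup.of 1
          ∨ s i = (FreeGroup.of 1)⁻¹ * FreeGroup.of 2 * (FreeGroup.of 0)⁻¹
          ∨ s i = (FreeGroup.of 0 * FreeGroup.of 2 * FreeGroup.of 1)⁻¹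
          ∨ s i = ((FreeGroup.of 1)⁻¹ * FreeGroup.of 2 * (FreeGroup.of 0)⁻¹)⁻¹) ∧
      (FreeGroup.of 2 : FreeGroup (Fin 3)) ^ (2 * m)
        = (List.ofFn fun i => c i * s i * (c i)⁻¹).prod) ∧
    (∀ (N : ℕ) (c : Fin N → FreeGroup (Fin 3)) (s : Fin N → FreeGroup (Fin 3)),
      (∀ i, s i = FreeGroup.of 0 * FreeGroup.of 2 * FreeGroup.of 1
          ∨ s i = (FreeGroup.of 1)⁻¹ * FreeGroup.of 2 * (FreeGroup.of 0)⁻¹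
          ∨ s i = (FreeGroup.of 0 * FreeGroup.of 2 * FreeGroup.of 1)⁻¹
          ∨ s i = ((FreeGroup.of 1)⁻¹ * FreeGroup.of 2 * (FreeGroup.of 0)⁻¹)⁻¹) →
      (FreeGroup.of 2 : FreeGroup (Fin 3)) ^ (2 * m)
        = (List.ofFn fun i => c i * s i * (c i)⁻¹).prod →
      2 * m ≤ N) := by
  refine ⟨⟨fun _ => (FreeGroup.of 0)⁻¹, fun i => fanRelator i, fun i => ?_, fan_prod_eq m⟩, ?_⟩
  · by_cases h : (i : ℕ) % 2 = 0
    · exact Or.inl (if_pos h)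
    · exact Or.inr (Or.inl (if_neg h))
  · intro N c s hs hprod
    have hle := natAbs_tExp_prod_le (List.ofFn fun i => c i * s i * (c i)⁻¹) (by
      intro x hx
      obtain ⟨i, rfl⟩ := List.mem_ofFn.mp hx
      rcases hs i with h | h | h | h <;> simp [h, tExp])
    rw [← hprod, List.length_ofFn] at hle
    have ht : (tExp (FreeGroup.of 2 ^ (2 * m))).toAdd = 2 * (m : ℤ) := by
      simp [tExp]
    omega
end
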